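/- Assume L/2 ≥ M ≥ r. Fix subsets S, S′ ⊆ {1,…,M}; for M+1 ≤ l ≤ L+1 let Y_l = (x_l, (x_{l−s})_{s∈S}) and Y′_l = (x_l, (x_{l−s})_{s∈S′}); let ν and ν′ denote the marginals of the stationary window distribution μ̄ corresponding to Y and Y′ respectively, and assume ν is entrywise positive. Define the averaged joint distribution p̂(E, E′) = (L−M)^{−1} Σ_{l=M+1}^{L} p(Y_{L+1} = E, Y′_l = E′) for E ∈ 𝒳^{1+|S|}, E′ ∈ 𝒳^{1+|S′|}. Then ‖ p̂ − ν ⊗ ν′ ‖_TV ≤ 2M/L + 4√(D₀+1) / ( L(1−λ)·√(min_E ν(E)) ). -/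

import Mathlib

open Finset

/-- Probability of the full sequence `x` (tokens indexed `0,…,T-1`, i.e. `x_1,…,x_T`)
under the `n`-gram Markov chain with parent offsets `r`, transition kernel `pk`,
and initial distribution `init` on the first `R` tokens. -/
noncomputable def ngramProb (d n R T : ℕ) (r : Fin n → ℕ)
    (pk : (Fin n → Fin d) → Fin d → ℝ) (init : (Fin R → Fin d) → ℝ)
    (hRT : R ≤ T) (x : Fin T → Fin d) : ℝ :=
  init (fun i => x ⟨i.1, lt_of_lt_of_le i.2 hRT⟩) *
    ∏ l ∈ (Finset.Ico R T).attach,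
      pk (fun k => x ⟨l.1 - r k, lt_of_le_of_lt (Nat.sub_le _ _) (Finset.mem_Ico.mp l.2).2⟩)
        (x ⟨l.1, (Finset.mem_Ico.mp l.2).2⟩)

/-- The window transition matrix `P_π` on `𝒳^R` of the `n`-gram chain:
`P(Z', Z) = π(z'_R | Z parents) · 1{Z' is the shift of Z}`. -/
noncomputable def windowMatrix (d n R : ℕ) (hR : 0 < R) (r : Fin n → ℕ)
    (hrpos : ∀ k, 0 < r k) (pk : (Fin n → Fin d) → Fin d → ℝ) :
    Matrix (Fin R → Fin d) (Fin R → Fin d) ℝ :=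
  Matrix.of fun Z' Z =>
    if ∀ j : Fin (R - 1),
        Z' ⟨j.1, lt_of_lt_of_le j.2 (Nat.sub_le R 1)⟩ = Z ⟨j.1 + 1, by have := j.2; omega⟩ then
      pk (fun k => Z ⟨R - r k, Nat.sub_lt hR (hrpos k)⟩) (Z' ⟨R - 1, Nat.sub_lt hR Nat.one_pos⟩)
    else 0

/-- The matrix `K - √μ (√μ)ᵀ` where `K = diag(√μ)⁻¹ P_π diag(√μ)`. -/
noncomputable def specA (d n R : ℕ) (hR : 0 < R) (r : Fin n → ℕ) (hrpos : ∀ k, 0 < r k)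
    (pk : (Fin n → Fin d) → Fin d → ℝ) (μ : (Fin R → Fin d) → ℝ) :
    Matrix (Fin R → Fin d) (Fin R → Fin d) ℝ :=
  (Matrix.diagonal fun Z => (Real.sqrt (μ Z))⁻¹) * windowMatrix d n R hR r hrpos pk *
      (Matrix.diagonal fun Z => Real.sqrt (μ Z)) -
    Matrix.vecMulVec (fun Z => Real.sqrt (μ Z)) (fun Z => Real.sqrt (μ Z))

/-- The tuple `(x_{l0-s})_{s ∈ S}` of tokens at offsets `S` before position `l0` (0-based). -/
def parents (d T : ℕ) (S : Finset ℕ) (x : Fin T → Fin d) (l0 : ℕ) (hl : l0 < T) :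
    {s // s ∈ S} → Fin d :=
  fun s => x ⟨l0 - s.1, lt_of_le_of_lt (Nat.sub_le _ _) hl⟩

/-- The window `Y_{l0} = (x_{l0}, (x_{l0-s})_{s ∈ S})` (0-based position `l0`). -/
def window (d T : ℕ) (S : Finset ℕ) (x : Fin T → Fin d) (l0 : ℕ) (hl : l0 < T) :
    Fin d × ({s // s ∈ S} → Fin d) :=
  (x ⟨l0, hl⟩, parents d T S x l0 hl)

/-- The law of the window `Y_{l0}` when the full sequence is distributed as `q`. -/
noncomputable def windowLaw (d T : ℕ) (S : Finset ℕ) (q : (Fin T → Fin d) → ℝ)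
    (l0 : ℕ) (hl : l0 < T) (w : Fin d × ({s // s ∈ S} → Fin d)) : ℝ :=
  ∑ x : Fin T → Fin d, if window d T S x l0 hl = w then q x else 0

/-- Total variation distance: half the ℓ₁ distance. -/
noncomputable def tvDist {α : Type*} [Fintype α] (p q : α → ℝ) : ℝ :=
  (∑ w, |p w - q w|) / 2

/-- χ²-divergence `D_{χ²}(p ‖ q) = Σ_ω (p ω - q ω)² / q ω`. -/
noncomputable def chiSq {α : Type*} [Fintype α] (p q : α → ℝ) : ℝ :=
  ∑ w, (p w - q w) ^ 2 / q w

theorem icoLtSucc {M L : ℕ} (l : {m // m ∈ Finset.Ico M L}) : l.1 < L + 1 :=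
  Nat.lt_succ_of_lt (Finset.mem_Ico.mp l.2).2

/-!
Write `P` for the window matrix, `D₀` for `chiSq μ₀ μ` and `ν`, `ν'` for the stationary laws of the
two windows. Removing the stationary direction, `P` contracts by `λ` both on centered vectors in
`ℓ²(1/μ)` and, transposed, on centered functions in `ℓ²(μ)`. The law of `Y_{L+1} = E` given the
tokens up to position `l` is `f_E P^k` evaluated at the last `R` tokens, where `f_E` is the law of
the window given its first `R` tokens and `k` is the gap between the stretches carrying `Y'_l` and
`Y_{L+1}`. Since `0 ≤ f_E ≤ 1`, the variance of `f_E` is at most its mean `ν E`, so by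
Cauchy-Schwarz replacing `f_E P^k` by `ν E` costs at most `√(D₀ + 1) λ^k √(ν E)` in `ℓ¹`, uniformly
over what `Y'_l` reveals. As `√(ν E) ≤ ν E / √(min ν)`, summing over `E` gives
`√(D₀ + 1) λ^k / √(min ν)`. The marginal of `Y'_l` is itself within `√D₀ λ^(l - M - 1)` of `ν'`.
Averaging over `l` sums two geometric series, except for the last `M - R` positions, whose
stretches overlap that of `Y_{L+1}` and for which the distance is bounded by `1`.
-/

section Averaging

theorem sum_range_pow_le {lam : ℝ} (h0 : 0 ≤ lam) (h1 : lam < 1) (N : ℕ) :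
    ∑ j ∈ range N, lam ^ j ≤ (1 - lam)⁻¹ :=
  tsum_geometric_of_lt_one h0 h1 ▸
    (summable_geometric_of_lt_one h0 h1).sum_le_tsum _ fun j _ => pow_nonneg h0 j

theorem sum_range_pow_add_pow_reflect_le {lam a b : ℝ} (h0 : 0 ≤ lam) (h1 : lam < 1)
    (hab : 0 ≤ a + b) (N : ℕ) :
    ∑ j ∈ range N, (a * lam ^ j + b * lam ^ (N - 1 - j)) ≤ (a + b) / (1 - lam) := by
  rw [sum_add_distrib, ← mul_sum, ← mul_sum, sum_range_reflect, ← add_mul, div_eq_mul_inv]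
  exact mul_le_mul_of_nonneg_left (sum_range_pow_le h0 h1 N) hab

theorem sum_range_le_of_le_pow_add_pow {lam a b : ℝ} (h0 : 0 ≤ lam) (h1 : lam < 1)
    (hab : 0 ≤ a + b) {B : ℕ → ℝ} (hB1 : ∀ j, B j ≤ 1) {N K : ℕ}
    (hB : ∀ j k, j + k + 1 + K = N → B j ≤ a * lam ^ j + b * lam ^ k) :
    ∑ j ∈ range N, B j ≤ K + (a + b) / (1 - lam) := by
  have hcount (c : ℕ → ℕ) (n : ℕ) : ∑ j ∈ range n, B (c j) ≤ n := by
    simpa using sum_le_sum fun j (_ : j ∈ range n) => hB1 (c j)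
  rcases le_total N K with hNK | hKN
  · have hNK' : (N : ℝ) ≤ K := by exact_mod_cast hNK
    have := div_nonneg hab (sub_pos.2 h1).le
    have hle : ∑ j ∈ range N, B j ≤ N := hcount id N
    linarith
  · obtain ⟨n, rfl⟩ := Nat.exists_eq_add_of_le' hKN
    have hgood : ∑ j ∈ range n, B j ≤ (a + b) / (1 - lam) :=
      (sum_le_sum fun j hj => hB j (n - 1 - j) (by have := mem_range.1 hj; lia)).trans
        (sum_range_pow_add_pow_reflect_le h0 h1 hab n)
    rw [sum_range_add]
    linarith [hcount (n + ·) K]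

end Averaging

section ProbabilityVectors

variable {Ω β γ : Type*} [Fintype Ω] [Fintype β] [Fintype γ]

theorem tvDist_le_one {p q : Ω → ℝ} (hp : p ∈ stdSimplex ℝ Ω) (hq : q ∈ stdSimplex ℝ Ω) :
    tvDist p q ≤ 1 := by
  have h : ∑ w, |p w - q w| ≤ ∑ w, (p w + q w) :=
    sum_le_sum fun w _ => abs_sub_le_iff.2
      ⟨by linarith [hp.1 w, hq.1 w], by linarith [hp.1 w, hq.1 w]⟩
  rw [sum_add_distrib, hp.2, hq.2] at h
  unfold tvDist
  linarith

theorem mul_mem_stdSimplex {p : β → ℝ} {q : γ → ℝ} (hp : p ∈ stdSimplex ℝ β)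
    (hq : q ∈ stdSimplex ℝ γ) : (fun w : β × γ => p w.1 * q w.2) ∈ stdSimplex ℝ (β × γ) := by
  refine ⟨fun w => mul_nonneg (hp.1 _) (hq.1 _), ?_⟩
  rw [Fintype.sum_prod_type, ← sum_mul_sum, hp.2, hq.2, one_mul]

theorem tvDist_average_le {κ : Type*} {s : Finset κ} (hs : s.Nonempty) (p : κ → Ω → ℝ)
    (q : Ω → ℝ) :
    tvDist (fun w => (∑ l ∈ s, p l w) / #s) q ≤ (∑ l ∈ s, tvDist (p l) q) / #s := by
  have hcard : (0 : ℝ) < #s := by exact_mod_cast hs.card_pos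
  have hterm (w : Ω) : |(∑ l ∈ s, p l w) / #s - q w| ≤ (∑ l ∈ s, |p l w - q w|) / #s := by
    have : (∑ l ∈ s, p l w) / #s - q w = (∑ l ∈ s, (p l w - q w)) / #s := by
      rw [sum_sub_distrib, sum_const, nsmul_eq_mul]
      field_simp
    rw [this, abs_div, abs_of_pos hcard]
    gcongr
    exact abs_sum_le_sum_abs _ _
  calc tvDist (fun w => (∑ l ∈ s, p l w) / #s) q
      ≤ (∑ w, (∑ l ∈ s, |p l w - q w|) / #s) / 2 :=
        div_le_div_of_nonneg_right (sum_le_sum fun w _ => hterm w) two_pos.le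
    _ = (∑ l ∈ s, tvDist (p l) q) / #s := by
        simp only [tvDist]
        rw [← sum_div, ← sum_div, sum_comm, div_right_comm]

theorem sum_abs_sub_mul_le {ν : β → ℝ} (hν : ν ∈ stdSimplex ℝ β) (J : β × γ → ℝ)
    (p ν' : γ → ℝ) :
    ∑ w, |J w - ν w.1 * ν' w.2| ≤
      ∑ b, ∑ c, |J (b, c) - ν b * p c| + ∑ c, |p c - ν' c| := by
  have hterm (b : β) (c : γ) :
      |J (b, c) - ν b * ν' c| ≤ |J (b, c) - ν b * p c| + ν b * |p c - ν' c| := by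
    have h := abs_sub_le (J (b, c)) (ν b * p c) (ν b * ν' c)
    rwa [← mul_sub (ν b), abs_mul (ν b), abs_of_nonneg (hν.1 b)] at h
  rw [Fintype.sum_prod_type]
  calc ∑ b, ∑ c, |J (b, c) - ν b * ν' c|
      ≤ ∑ b, ∑ c, (|J (b, c) - ν b * p c| + ν b * |p c - ν' c|) :=
        sum_le_sum fun b _ => sum_le_sum fun c _ => hterm b c
    _ = _ := by
        simp only [sum_add_distrib, ← mul_sum]
        rw [← sum_mul, hν.2, one_mul]

theorem sum_abs_dotProduct_le {f : β → Ω → ℝ} (hf : ∀ z, (fun b => f b z) ∈ stdSimplex ℝ β)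
    (η : Ω → ℝ) : ∑ b, |f b ⬝ᵥ η| ≤ ∑ z, |η z| :=
  calc ∑ b, |f b ⬝ᵥ η| ≤ ∑ b, ∑ z, f b z * |η z| :=
        sum_le_sum fun b _ => (abs_sum_le_sum_abs _ _).trans_eq <|
          sum_congr rfl fun z _ => by rw [abs_mul, abs_of_nonneg ((hf z).1 b)]
    _ = ∑ z, |η z| := by
        rw [sum_comm]
        exact sum_congr rfl fun z _ => by rw [← sum_mul, (hf z).2, one_mul]

theorem sum_mul_le_sqrt_mul_sqrt_of_pos {μ : Ω → ℝ} (hμ : ∀ z, 0 < μ z) (a b : Ω → ℝ) :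
    ∑ z, a z * b z ≤ √(∑ z, a z ^ 2 / μ z) * √(∑ z, μ z * b z ^ 2) := by
  have h := Real.sum_mul_le_sqrt_mul_sqrt univ (fun z => a z / √(μ z)) (fun z => √(μ z) * b z)
  have hab (z : Ω) : a z / √(μ z) * (√(μ z) * b z) = a z * b z := by
    have := (Real.sqrt_pos.2 (hμ z)).ne'
    field_simp
  simpa only [hab, div_pow, mul_pow, Real.sq_sqrt (hμ _).le] using h

theorem chiSq_nonneg {μ : Ω → ℝ} (hμ : ∀ z, 0 < μ z) (p : Ω → ℝ) : 0 ≤ chiSq p μ :=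
  sum_nonneg fun z _ => div_nonneg (sq_nonneg _) (hμ z).le

theorem sum_sq_div_eq_chiSq_add_one {μ q : Ω → ℝ} (hμ : ∀ z, 0 < μ z) (hμ1 : ∑ z, μ z = 1)
    (hq : ∑ z, q z = 1) : ∑ z, q z ^ 2 / μ z = chiSq q μ + 1 := by
  have hz (z : Ω) : q z ^ 2 / μ z = (q z - μ z) ^ 2 / μ z + (2 * q z - μ z) := by
    have := (hμ z).ne'
    field_simp
    ring
  simp only [hz, sum_add_distrib, sum_sub_distrib, ← mul_sum, hq, hμ1, chiSq]
  norm_num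

theorem sum_abs_sub_le_sqrt_chiSq {μ : Ω → ℝ} (hμ : ∀ z, 0 < μ z) (hμ1 : ∑ z, μ z = 1)
    (p : Ω → ℝ) : ∑ z, |p z - μ z| ≤ √(chiSq p μ) := by
  have h := sum_mul_le_sqrt_mul_sqrt_of_pos hμ (fun z => |p z - μ z|) 1
  simpa [hμ1, chiSq] using h

theorem sum_mul_sub_dotProduct_sq_le {μ f : Ω → ℝ} (hμ : μ ∈ stdSimplex ℝ Ω)
    (hf : ∀ z, f z ∈ Set.Icc 0 1) : ∑ z, μ z * (f z - f ⬝ᵥ μ) ^ 2 ≤ f ⬝ᵥ μ := by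
  have hvar : ∑ z, μ z * (f z - f ⬝ᵥ μ) ^ 2 = ∑ z, μ z * f z ^ 2 - (f ⬝ᵥ μ) ^ 2 := by
    have hz (z : Ω) : μ z * (f z - f ⬝ᵥ μ) ^ 2 =
        μ z * f z ^ 2 - 2 * (f ⬝ᵥ μ) * (f z * μ z) + (f ⬝ᵥ μ) ^ 2 * μ z := by ring
    have hmean : ∑ z, f z * μ z = f ⬝ᵥ μ := rfl
    simp only [hz, sum_add_distrib, sum_sub_distrib, ← mul_sum, hμ.2, hmean]
    ring
  have hsq : ∑ z, μ z * f z ^ 2 ≤ f ⬝ᵥ μ :=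
    sum_le_sum fun z _ => by
      rw [mul_comm]
      exact mul_le_mul_of_nonneg_right
        (pow_le_of_le_one (hf z).1 (hf z).2 two_ne_zero) (hμ.1 z)
  linarith [sq_nonneg (f ⬝ᵥ μ)]

end ProbabilityVectors

section SpectralContraction

open scoped Matrix Matrix.Norms.L2Operator

variable {Ω : Type*} [Fintype Ω] [DecidableEq Ω]

theorem sum_sq_mulVec_le {A : Matrix Ω Ω ℝ} {c : ℝ} (hA : ‖A‖ ≤ c) (v : Ω → ℝ) :
    ∑ i, (A *ᵥ v) i ^ 2 ≤ c ^ 2 * ∑ i, v i ^ 2 := by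
  have h : ‖WithLp.toLp 2 (A *ᵥ v)‖ ≤ c * ‖WithLp.toLp 2 v‖ :=
    (Matrix.l2_opNorm_mulVec A (WithLp.toLp 2 v)).trans
      (mul_le_mul_of_nonneg_right hA (norm_nonneg _))
  have h2 := pow_le_pow_left₀ (norm_nonneg _) h 2
  simpa only [mul_pow, EuclideanSpace.real_norm_sq_eq] using h2

theorem sum_sq_vecMul_le {A : Matrix Ω Ω ℝ} {c : ℝ} (hA : ‖A‖ ≤ c) (v : Ω → ℝ) :
    ∑ i, (v ᵥ* A) i ^ 2 ≤ c ^ 2 * ∑ i, v i ^ 2 := by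
  rw [← Matrix.mulVec_transpose]
  refine sum_sq_mulVec_le ?_ v
  rwa [← Matrix.conjTranspose_eq_transpose_of_trivial, Matrix.l2_opNorm_conjTranspose]

theorem l2_opNorm_le_of_sqrt_sum_sq_le {A : Matrix Ω Ω ℝ} {c : ℝ} (hc : 0 ≤ c)
    (hA : ∀ v : Ω → ℝ, √(∑ i, (A *ᵥ v) i ^ 2) ≤ c * √(∑ i, v i ^ 2)) : ‖A‖ ≤ c := by
  rw [Matrix.l2_opNorm_def]
  refine ContinuousLinearMap.opNorm_le_bound _ hc fun v => ?_
  simpa [EuclideanSpace.norm_eq] using hA v.ofLp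

/-- The matrix `diag(√μ)⁻¹ P diag(√μ) - √μ (√μ)ᵀ`: a column-stochastic matrix `P`, symmetrized
with respect to its stationary vector `μ`, with the top eigendirection `√μ` removed. It unfolds to
`specA` when `P` is the window matrix. -/
noncomputable def deflatedKernel (P : Matrix Ω Ω ℝ) (μ : Ω → ℝ) : Matrix Ω Ω ℝ :=
  Matrix.diagonal (fun z => (√(μ z))⁻¹) * P * Matrix.diagonal (fun z => √(μ z)) -
    Matrix.vecMulVec (fun z => √(μ z)) (fun z => √(μ z))

theorem deflatedKernel_apply (P : Matrix Ω Ω ℝ) (μ : Ω → ℝ) (z' z : Ω) :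
    deflatedKernel P μ z' z = (√(μ z'))⁻¹ * P z' z * √(μ z) - √(μ z') * √(μ z) := by
  simp [deflatedKernel, Matrix.vecMulVec_apply]

theorem deflatedKernel_mulVec_div_sqrt (P : Matrix Ω Ω ℝ) {μ : Ω → ℝ} (hμ : ∀ z, 0 < μ z)
    {η : Ω → ℝ} (hη : ∑ z, η z = 0) :
    deflatedKernel P μ *ᵥ (fun z => η z / √(μ z)) = fun z => (P *ᵥ η) z / √(μ z) := by
  funext z'
  have hz (z : Ω) : deflatedKernel P μ z' z * (η z / √(μ z)) =
      P z' z * η z / √(μ z') - √(μ z') * η z := by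
    have := (Real.sqrt_pos.2 (hμ z)).ne'
    have := (Real.sqrt_pos.2 (hμ z')).ne'
    rw [deflatedKernel_apply]
    field_simp
  simp only [Matrix.mulVec, dotProduct, hz, sum_sub_distrib, ← mul_sum, ← sum_div, hη,
    mul_zero, sub_zero]

theorem sqrt_mul_vecMul_deflatedKernel (P : Matrix Ω Ω ℝ) {μ : Ω → ℝ} (hμ : ∀ z, 0 < μ z)
    {f : Ω → ℝ} (hf : f ⬝ᵥ μ = 0) :
    (fun z => √(μ z) * f z) ᵥ* deflatedKernel P μ = fun z => √(μ z) * (f ᵥ* P) z := by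
  funext z
  have hz (z' : Ω) : √(μ z') * f z' * deflatedKernel P μ z' z =
      √(μ z) * (f z' * P z' z) - √(μ z) * (f z' * μ z') := by
    have := (Real.sqrt_pos.2 (hμ z')).ne'
    have hsq := Real.sq_sqrt (hμ z').le
    rw [deflatedKernel_apply]
    field_simp
    rw [hsq]
  have hmean : ∑ z', f z' * μ z' = 0 := hf
  simp only [Matrix.vecMul, dotProduct, hz, sum_sub_distrib, ← mul_sum, hmean, mul_zero, sub_zero]

theorem sub_const_vecMul {P : Matrix Ω Ω ℝ} (hP : P ∈ Matrix.colStochastic ℝ Ω) (f : Ω → ℝ)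
    (c : ℝ) : (fun z => f z - c) ᵥ* P = fun z => (f ᵥ* P) z - c := by
  have hf : (fun z => f z - c) = f - c • 1 := by
    funext z
    simp
  funext z
  rw [hf, Matrix.sub_vecMul, Matrix.smul_vecMul, Matrix.one_vecMul_of_mem_colStochastic hP]
  simp

/-- `P` is a column-stochastic matrix with positive stationary probability vector `μ`, and the
`ℓ₂` operator norm of `P` away from stationarity, in the sense of `deflatedKernel`, is at most
`lam`. -/
structure IsSpectralContraction (P : Matrix Ω Ω ℝ) (μ : Ω → ℝ) (lam : ℝ) : Prop where
  stochastic : P ∈ Matrix.colStochastic ℝ Ω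
  pos : ∀ z, 0 < μ z
  sum_eq_one : ∑ z, μ z = 1
  stationary : P *ᵥ μ = μ
  norm_le : ‖deflatedKernel P μ‖ ≤ lam

namespace IsSpectralContraction

variable {P : Matrix Ω Ω ℝ} {μ : Ω → ℝ} {lam : ℝ}

theorem nonneg (h : IsSpectralContraction P μ lam) : 0 ≤ lam :=
  (norm_nonneg _).trans h.norm_le

theorem mem_stdSimplex (h : IsSpectralContraction P μ lam) : μ ∈ stdSimplex ℝ Ω :=
  ⟨fun z => (h.pos z).le, h.sum_eq_one⟩

theorem sum_pow_mulVec (h : IsSpectralContraction P μ lam) (k : ℕ) (q : Ω → ℝ) :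
    ∑ z, (P ^ k *ᵥ q) z = ∑ z, q z :=
  Matrix.sum_mulVec_of_mem_colStochastic (pow_mem h.stochastic k)

theorem pow_mulVec_stationary (h : IsSpectralContraction P μ lam) (k : ℕ) :
    P ^ k *ᵥ μ = μ := by
  induction k with
  | zero => simp
  | succ k ih => rw [pow_succ, ← Matrix.mulVec_mulVec, h.stationary, ih]

theorem sum_sq_pow_mulVec_div_le (h : IsSpectralContraction P μ lam) (k : ℕ) {η : Ω → ℝ}
    (hη : ∑ z, η z = 0) :
    ∑ z, (P ^ k *ᵥ η) z ^ 2 / μ z ≤ (lam ^ k) ^ 2 * ∑ z, η z ^ 2 / μ z := by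
  induction k with
  | zero => simp
  | succ k ih =>
    have hstep := sum_sq_mulVec_le h.norm_le fun z => (P ^ k *ᵥ η) z / √(μ z)
    rw [deflatedKernel_mulVec_div_sqrt P h.pos (by rw [h.sum_pow_mulVec, hη])] at hstep
    simp only [div_pow, Real.sq_sqrt (h.pos _).le, Matrix.mulVec_mulVec, ← pow_succ'] at hstep
    calc ∑ z, (P ^ (k + 1) *ᵥ η) z ^ 2 / μ z
        ≤ lam ^ 2 * ((lam ^ k) ^ 2 * ∑ z, η z ^ 2 / μ z) := hstep.trans (by gcongr)
      _ = (lam ^ (k + 1)) ^ 2 * ∑ z, η z ^ 2 / μ z := by ring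

theorem sum_mul_sq_vecMul_pow_le (h : IsSpectralContraction P μ lam) (k : ℕ) {f : Ω → ℝ}
    (hf : f ⬝ᵥ μ = 0) :
    ∑ z, μ z * (f ᵥ* P ^ k) z ^ 2 ≤ (lam ^ k) ^ 2 * ∑ z, μ z * f z ^ 2 := by
  induction k with
  | zero => simp
  | succ k ih =>
    have hmean : (f ᵥ* P ^ k) ⬝ᵥ μ = 0 := by
      rw [← Matrix.dotProduct_mulVec, h.pow_mulVec_stationary, hf]
    have hstep := sum_sq_vecMul_le h.norm_le fun z => √(μ z) * (f ᵥ* P ^ k) z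
    rw [sqrt_mul_vecMul_deflatedKernel P h.pos hmean] at hstep
    simp only [mul_pow, Real.sq_sqrt (h.pos _).le, Matrix.vecMul_vecMul, ← pow_succ] at hstep
    calc ∑ z, μ z * (f ᵥ* P ^ (k + 1)) z ^ 2
        ≤ lam ^ 2 * ((lam ^ k) ^ 2 * ∑ z, μ z * f z ^ 2) := hstep.trans (by gcongr)
      _ = (lam ^ (k + 1)) ^ 2 * ∑ z, μ z * f z ^ 2 := by ring

theorem chiSq_pow_mulVec_le (h : IsSpectralContraction P μ lam) (k : ℕ) {p : Ω → ℝ}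
    (hp : ∑ z, p z = 1) : chiSq (P ^ k *ᵥ p) μ ≤ (lam ^ k) ^ 2 * chiSq p μ := by
  have hη : ∑ z, (p - μ) z = 0 := by simp [hp, h.sum_eq_one]
  have hk := h.sum_sq_pow_mulVec_div_le k hη
  rwa [Matrix.mulVec_sub, h.pow_mulVec_stationary] at hk

theorem sum_abs_pow_mulVec_sub_le (h : IsSpectralContraction P μ lam) (k : ℕ) {p : Ω → ℝ}
    (hp : ∑ z, p z = 1) : ∑ z, |(P ^ k *ᵥ p) z - μ z| ≤ lam ^ k * √(chiSq p μ) := by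
  calc ∑ z, |(P ^ k *ᵥ p) z - μ z| ≤ √(chiSq (P ^ k *ᵥ p) μ) :=
        sum_abs_sub_le_sqrt_chiSq h.pos h.sum_eq_one _
    _ ≤ √((lam ^ k) ^ 2 * chiSq p μ) := Real.sqrt_le_sqrt (h.chiSq_pow_mulVec_le k hp)
    _ = lam ^ k * √(chiSq p μ) := by
        rw [Real.sqrt_mul (sq_nonneg _), Real.sqrt_sq (pow_nonneg h.nonneg k)]

theorem sum_pow_mulVec_mul_abs_vecMul_pow_le (h : IsSpectralContraction P μ lam)
    (hlam : lam ≤ 1) (j k : ℕ) {p : Ω → ℝ} (hp : ∑ z, p z = 1) {f : Ω → ℝ} (hf : f ⬝ᵥ μ = 0) :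
    ∑ z, (P ^ j *ᵥ p) z * |(f ᵥ* P ^ k) z| ≤
      √(chiSq p μ + 1) * (lam ^ k * √(∑ z, μ z * f z ^ 2)) := by
  have hq : ∑ z, (P ^ j *ᵥ p) z ^ 2 / μ z ≤ chiSq p μ + 1 := by
    rw [sum_sq_div_eq_chiSq_add_one h.pos h.sum_eq_one (by rw [h.sum_pow_mulVec, hp])]
    gcongr
    refine (h.chiSq_pow_mulVec_le j hp).trans (mul_le_of_le_one_left (chiSq_nonneg h.pos p) ?_)
    exact pow_le_one₀ (pow_nonneg h.nonneg j) (pow_le_one₀ h.nonneg hlam)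
  calc ∑ z, (P ^ j *ᵥ p) z * |(f ᵥ* P ^ k) z|
      ≤ √(∑ z, (P ^ j *ᵥ p) z ^ 2 / μ z) * √(∑ z, μ z * |(f ᵥ* P ^ k) z| ^ 2) :=
        sum_mul_le_sqrt_mul_sqrt_of_pos h.pos _ _
    _ ≤ √(chiSq p μ + 1) * √((lam ^ k) ^ 2 * ∑ z, μ z * f z ^ 2) := by
        simp only [sq_abs]
        gcongr
        exact h.sum_mul_sq_vecMul_pow_le k hf
    _ = √(chiSq p μ + 1) * (lam ^ k * √(∑ z, μ z * f z ^ 2)) := by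
        rw [Real.sqrt_mul (sq_nonneg _), Real.sqrt_sq (pow_nonneg h.nonneg k)]

end IsSpectralContraction

end SpectralContraction

section FiberIndicator

variable {α β γ : Type*} [DecidableEq β] [DecidableEq γ]

/-- The indicator function of the fiber of `φ` over `b`. -/
def fiberIndicator (φ : α → β) (b : β) : α → ℝ :=
  fun x => if φ x = b then 1 else 0

theorem fiberIndicator_nonneg (φ : α → β) (b : β) (x : α) : 0 ≤ fiberIndicator φ b x := by
  unfold fiberIndicator
  positivity

theorem fiberIndicator_prodMk (φ : α → β) (ψ : α → γ) (w : β × γ) :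
    fiberIndicator (fun x => (φ x, ψ x)) w = fiberIndicator ψ w.2 * fiberIndicator φ w.1 := by
  funext x
  simp only [fiberIndicator, Pi.mul_apply, Prod.ext_iff, ite_and, mul_ite, mul_one, mul_zero]

theorem sum_fiberIndicator [Fintype β] (φ : α → β) : ∑ b, fiberIndicator φ b = 1 := by
  funext x
  simp [fiberIndicator]

theorem dependsOn_fiberIndicator {κ X : Type*} {φ : (κ → X) → β} {s : Set κ}
    (hφ : DependsOn φ s) (b : β) : DependsOn (fiberIndicator φ b) s := fun x y h => by
  simp only [fiberIndicator, hφ h]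

end FiberIndicator

section NgramExpectation

variable {X ι : Type*} [Fintype X]

/-- One step of an `n`-gram chain on infinite sequences: integrate out the token at position `t`,
drawn from `pk` given its parents at positions `t - r k`. -/
def tokenStep (r : ι → ℕ) (pk : (ι → X) → X → ℝ) (t : ℕ) :
    ((ℕ → X) → ℝ) →ₗ[ℝ] ((ℕ → X) → ℝ) where
  toFun F x := ∑ e, pk (fun k => x (t - r k)) e * F (Function.update x t e)
  map_add' F G := by
    ext
    simp [mul_add, sum_add_distrib]
  map_smul' c F := by
    ext
    simp [mul_sum, mul_left_comm]

theorem tokenStep_apply (r : ι → ℕ) (pk : (ι → X) → X → ℝ) (t : ℕ) (F : (ℕ → X) → ℝ)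
    (x : ℕ → X) :
    tokenStep r pk t F x = ∑ e, pk (fun k => x (t - r k)) e * F (Function.update x t e) :=
  rfl

/-- The conditional expectation of a function of the sequence given the tokens before position
`t`, when the tokens `t, …, t + k - 1` are drawn from the `n`-gram chain and the later ones are
left unchanged. -/
def ngramCondExp (r : ι → ℕ) (pk : (ι → X) → X → ℝ) :
    ℕ → ℕ → ((ℕ → X) → ℝ) →ₗ[ℝ] ((ℕ → X) → ℝ)
  | 0, _ => LinearMap.id
  | k + 1, t => tokenStep r pk t ∘ₗ ngramCondExp r pk k (t + 1)

variable {r : ι → ℕ} {pk : (ι → X) → X → ℝ}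

@[simp]
theorem ngramCondExp_zero (t : ℕ) (F : (ℕ → X) → ℝ) : ngramCondExp r pk 0 t F = F :=
  rfl

theorem ngramCondExp_succ (k t : ℕ) (F : (ℕ → X) → ℝ) :
    ngramCondExp r pk (k + 1) t F = tokenStep r pk t (ngramCondExp r pk k (t + 1) F) :=
  rfl

theorem ngramCondExp_add (j k t : ℕ) (F : (ℕ → X) → ℝ) :
    ngramCondExp r pk (j + k) t F = ngramCondExp r pk j t (ngramCondExp r pk k (t + j) F) := by
  induction j generalizing t with
  | zero => simp
  | succ j ih =>
    rw [Nat.succ_add_eq_add_succ, Nat.add_succ, ngramCondExp_succ, ih, ngramCondExp_succ,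
      Nat.add_right_comm, add_assoc]

theorem abs_ngramCondExp_le (hpk : ∀ Y e, 0 ≤ pk Y e) (k t : ℕ) (F : (ℕ → X) → ℝ)
    (x : ℕ → X) : |ngramCondExp r pk k t F x| ≤ ngramCondExp r pk k t (fun y => |F y|) x := by
  induction k generalizing t x with
  | zero => exact le_rfl
  | succ k ih =>
    simp only [ngramCondExp_succ, tokenStep_apply]
    refine (abs_sum_le_sum_abs _ _).trans (sum_le_sum fun e _ => ?_)
    rw [abs_mul, abs_of_nonneg (hpk _ e)]
    exact mul_le_mul_of_nonneg_left (ih _ _) (hpk _ e)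

theorem ngramCondExp_nonneg (hpk : ∀ Y e, 0 ≤ pk Y e) (k t : ℕ) {F : (ℕ → X) → ℝ}
    (hF : ∀ y, 0 ≤ F y) (x : ℕ → X) : 0 ≤ ngramCondExp r pk k t F x := by
  simpa only [abs_of_nonneg (hF _)] using (abs_nonneg _).trans (abs_ngramCondExp_le hpk k t F x)

theorem ngramCondExp_const (hpk : ∀ Y, ∑ e, pk Y e = 1) (k t : ℕ) (c : ℝ) :
    ngramCondExp r pk k t (fun _ => c) = fun _ => c := by
  induction k generalizing t with
  | zero => rfl
  | succ k ih =>
    funext x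
    rw [ngramCondExp_succ, ih, tokenStep_apply, ← sum_mul, hpk, one_mul]

theorem ngramCondExp_mul {t : ℕ} {F : (ℕ → X) → ℝ} (hF : DependsOn F (Set.Iio t)) (k : ℕ)
    (G : (ℕ → X) → ℝ) : ngramCondExp r pk k t (F * G) = F * ngramCondExp r pk k t G := by
  induction k generalizing t with
  | zero => rfl
  | succ k ih =>
    funext x
    have hupdate (e : X) : F (Function.update x t e) = F x :=
      hF fun i hi => Function.update_of_ne (Set.mem_Iio.1 hi).ne _ _
    rw [ngramCondExp_succ, ih fun y z h => hF fun i hi => h i (Nat.lt_succ_of_lt hi)]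
    simp only [ngramCondExp_succ, tokenStep_apply, Pi.mul_apply, hupdate, mul_sum, mul_left_comm]

theorem dependsOn_ngramCondExp (hr : ∀ i, 0 < r i) (k : ℕ) {t : ℕ} (ht : 0 < t)
    {F : (ℕ → X) → ℝ} (hF : DependsOn F (Set.Iio (t + k))) :
    DependsOn (ngramCondExp r pk k t F) (Set.Iio t) := by
  induction k generalizing t with
  | zero => exact hF
  | succ k ih =>
    intro x y h
    have hstep := ih t.succ_pos (by rwa [Nat.succ_add_eq_add_succ])
    have hparents : (fun i => x (t - r i)) = fun i => y (t - r i) :=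
      funext fun i => h _ (Nat.sub_lt ht (hr i))
    simp only [ngramCondExp_succ, tokenStep_apply, hparents]
    refine sum_congr rfl fun e _ => congrArg _ (hstep fun i hi => ?_)
    rcases Nat.lt_succ_iff_lt_or_eq.1 hi with hi | rfl
    · rw [Function.update_of_ne hi.ne, Function.update_of_ne hi.ne, h i hi]
    · simp only [Function.update_self]

theorem ngramCondExp_comp_shift (k : ℕ) {t : ℕ} (hr : ∀ i, r i ≤ t) (s : ℕ)
    (F : (ℕ → X) → ℝ) :
    ngramCondExp r pk k (t + s) (fun x => F fun i => x (i + s)) =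
      fun x => ngramCondExp r pk k t F fun i => x (i + s) := by
  induction k generalizing t with
  | zero => rfl
  | succ k ih =>
    funext x
    have hupdate (e : X) : (fun i => Function.update x (t + s) e (i + s)) =
        Function.update (fun i => x (i + s)) t e := by
      funext i
      simp only [Function.update_apply, Nat.add_right_cancel_iff]
    have hparents : (fun i => x (t + s - r i)) = fun i => x (t - r i + s) :=
      funext fun i => by rw [Nat.sub_add_comm (hr i)]
    rw [ngramCondExp_succ, Nat.add_right_comm, ih fun i => Nat.le_succ_of_le (hr i)]
    simp only [ngramCondExp_succ, tokenStep_apply, hupdate, hparents]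

variable {β : Type*} [Fintype β] [DecidableEq β]

theorem ngramCondExp_fiberIndicator_mem_stdSimplex
    (hpk : ∀ Y, pk Y ∈ stdSimplex ℝ X) (k t : ℕ) (φ : (ℕ → X) → β) (x : ℕ → X) :
    (fun b => ngramCondExp r pk k t (fiberIndicator φ b) x) ∈ stdSimplex ℝ β := by
  refine ⟨fun b => ngramCondExp_nonneg (fun Y => (hpk Y).1) k t (fiberIndicator_nonneg φ b) x, ?_⟩
  rw [← Finset.sum_apply, ← map_sum, sum_fiberIndicator]
  exact congrFun (ngramCondExp_const (fun Y => (hpk Y).2) k t 1) x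

end NgramExpectation

section WindowChain

open scoped Matrix

variable {X : Type*}

/-- The `R` tokens of a sequence that precede position `t`. -/
def stateAt (R t : ℕ) (x : ℕ → X) : Fin R → X :=
  fun i => x (t - R + i)

/-- The window obtained from `Z` by dropping its first token and appending `e`. -/
def slideWindow {R : ℕ} (Z : Fin R → X) (e : X) : Fin R → X :=
  fun i => if h : i.1 + 1 < R then Z ⟨i.1 + 1, h⟩ else e

theorem stateAt_succ_update {R t : ℕ} (ht : R ≤ t) (x : ℕ → X) (e : X) :
    stateAt R (t + 1) (Function.update x t e) = slideWindow (stateAt R t x) e := by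
  funext i
  by_cases h : i.1 + 1 < R
  · simp only [stateAt, slideWindow, h, dite_true]
    rw [Function.update_of_ne (by lia)]
    congr 1
    lia
  · have hlast : t + 1 - R + i.1 = t := by lia
    simp only [stateAt, slideWindow, h, dite_false, hlast, Function.update_self]

theorem eq_slideWindow_iff {R : ℕ} (hR : 0 < R) (Z' Z : Fin R → X) (e : X) :
    Z' = slideWindow Z e ↔
      (∀ j : Fin (R - 1), Z' ⟨j.1, by lia⟩ = Z ⟨j.1 + 1, by lia⟩) ∧ Z' ⟨R - 1, by lia⟩ = e := by
  refine ⟨?_, fun ⟨hinit, hlast⟩ => funext fun i => ?_⟩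
  · rintro rfl
    refine ⟨fun j => dif_pos (by lia), dif_neg (by simp only; lia)⟩
  · by_cases h : i.1 + 1 < R
    · rw [slideWindow, dif_pos h]
      exact hinit ⟨i.1, by lia⟩
    · have hi : i = ⟨R - 1, by lia⟩ := Fin.ext (by simp only; lia)
      rw [slideWindow, dif_neg h, hi, hlast]

variable {d n R : ℕ} {hR : 0 < R} {r : Fin n → ℕ} {hrpos : ∀ i, 0 < r i}
  {pk : (Fin n → Fin d) → Fin d → ℝ}

theorem windowMatrix_apply (Z' Z : Fin R → Fin d) :
    windowMatrix d n R hR r hrpos pk Z' Z =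
      ∑ e, if Z' = slideWindow Z e then
        pk (fun k => Z ⟨R - r k, Nat.sub_lt hR (hrpos k)⟩) e else 0 := by
  simp only [windowMatrix, Matrix.of_apply, eq_slideWindow_iff hR, ite_and, sum_ite_irrel,
    sum_ite_eq, mem_univ, if_true, sum_const_zero]

theorem vecMul_windowMatrix_apply (f : (Fin R → Fin d) → ℝ) (Z : Fin R → Fin d) :
    (f ᵥ* windowMatrix d n R hR r hrpos pk) Z =
      ∑ e, pk (fun k => Z ⟨R - r k, Nat.sub_lt hR (hrpos k)⟩) e * f (slideWindow Z e) := by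
  simp only [Matrix.vecMul, dotProduct, windowMatrix_apply, mul_sum, mul_ite, mul_zero]
  rw [sum_comm]
  simp only [sum_ite_eq', mem_univ, if_true, mul_comm]

theorem windowMatrix_mem_colStochastic (hpk : ∀ Y, pk Y ∈ stdSimplex ℝ (Fin d)) :
    windowMatrix d n R hR r hrpos pk ∈ Matrix.colStochastic ℝ (Fin R → Fin d) := by
  refine ⟨fun Z' Z => ?_, funext fun Z => ?_⟩
  · rw [windowMatrix_apply]
    refine sum_nonneg fun e _ => ?_
    split_ifs
    exacts [(hpk _).1 e, le_rfl]
  · simpa only [vecMul_windowMatrix_apply, Pi.one_apply, mul_one] using (hpk _).2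

theorem tokenStep_comp_stateAt (hrR : ∀ i, r i ≤ R) {t : ℕ} (ht : R ≤ t)
    (f : (Fin R → Fin d) → ℝ) :
    tokenStep r pk t (fun x => f (stateAt R (t + 1) x)) =
      fun x => (f ᵥ* windowMatrix d n R hR r hrpos pk) (stateAt R t x) := by
  funext x
  have hparents : (fun k => x (t - r k)) =
      fun k => stateAt R t x ⟨R - r k, Nat.sub_lt hR (hrpos k)⟩ := by
    funext k
    have := hrR k
    rw [stateAt]
    congr 1
    lia
  simp only [tokenStep_apply, vecMul_windowMatrix_apply, stateAt_succ_update ht, hparents]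

theorem ngramCondExp_comp_stateAt (hrR : ∀ i, r i ≤ R) (k : ℕ) {t : ℕ} (ht : R ≤ t)
    (f : (Fin R → Fin d) → ℝ) :
    ngramCondExp r pk k t (fun x => f (stateAt R (t + k) x)) =
      fun x => (f ᵥ* windowMatrix d n R hR r hrpos pk ^ k) (stateAt R t x) := by
  induction k generalizing t with
  | zero => simp
  | succ k ih =>
    rw [ngramCondExp_succ, ← Nat.succ_add_eq_add_succ t k, ih (Nat.le_succ_of_le ht),
      tokenStep_comp_stateAt (hR := hR) (hrpos := hrpos) hrR ht, Matrix.vecMul_vecMul, ← pow_succ]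

end WindowChain

section NgramLaw

variable {X ι : Type*} [Nonempty X]

/-- Extension of a finite sequence to an infinite one by an arbitrary token, so that functions of
sequences of all lengths live on the same space `ℕ → X`. -/
noncomputable def extendSeq {T : ℕ} (x : Fin T → X) : ℕ → X :=
  Function.extend Fin.val x fun _ => Classical.arbitrary X

theorem extendSeq_of_lt {T : ℕ} (x : Fin T → X) {i : ℕ} (hi : i < T) :
    extendSeq x i = x ⟨i, hi⟩ :=
  Fin.val_injective.extend_apply x _ ⟨i, hi⟩

theorem extendSeq_of_ge {T : ℕ} (x : Fin T → X) {i : ℕ} (hi : T ≤ i) :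
    extendSeq x i = Classical.arbitrary X :=
  Function.extend_apply' _ _ _ fun ⟨j, hj⟩ => by lia

theorem stateAt_extendSeq {R : ℕ} (z : Fin R → X) : stateAt R R (extendSeq z) = z := by
  funext i
  rw [stateAt, Nat.sub_self, zero_add, extendSeq_of_lt z i.2]

theorem extendSeq_snoc {T : ℕ} (x : Fin T → X) (e : X) :
    extendSeq (Fin.snoc x e : Fin (T + 1) → X) = Function.update (extendSeq x) T e := by
  funext i
  rcases lt_trichotomy i T with hi | rfl | hi
  · rw [Function.update_of_ne hi.ne, extendSeq_of_lt _ (Nat.lt_succ_of_lt hi),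
      extendSeq_of_lt x hi]
    exact Fin.snoc_castSucc (α := fun _ => X) e x ⟨i, hi⟩
  · rw [Function.update_self, extendSeq_of_lt _ (Nat.lt_succ_self i)]
    exact Fin.snoc_last (α := fun _ => X) e x
  · rw [Function.update_of_ne hi.ne', extendSeq_of_ge _ hi, extendSeq_of_ge _ hi.le]

variable [Fintype X]

/-- The expectation of a function of the sequence when the first `R` tokens have law `init` and
the tokens `R, …, T - 1` are drawn from the `n`-gram chain; the later tokens are those of
`extendSeq`. -/
noncomputable def ngramExp {R : ℕ} (r : ι → ℕ) (pk : (ι → X) → X → ℝ)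
    (init : (Fin R → X) → ℝ) (T : ℕ) : ((ℕ → X) → ℝ) →ₗ[ℝ] ℝ where
  toFun F := ∑ z, init z * ngramCondExp r pk (T - R) R F (extendSeq z)
  map_add' F G := by simp [mul_add, sum_add_distrib]
  map_smul' c F := by simp [mul_sum, mul_left_comm]

variable {R : ℕ} {r : ι → ℕ} {pk : (ι → X) → X → ℝ} {init : (Fin R → X) → ℝ}

theorem ngramExp_apply (T : ℕ) (F : (ℕ → X) → ℝ) :
    ngramExp r pk init T F = ∑ z, init z * ngramCondExp r pk (T - R) R F (extendSeq z) :=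
  rfl

theorem ngramExp_add {t : ℕ} (ht : R ≤ t) (k : ℕ) (F : (ℕ → X) → ℝ) :
    ngramExp r pk init (t + k) F = ngramExp r pk init t (ngramCondExp r pk k t F) := by
  rw [ngramExp_apply, ngramExp_apply, Nat.sub_add_comm ht, ngramCondExp_add,
    Nat.add_sub_cancel' ht]

theorem ngramExp_succ {T : ℕ} (hT : R ≤ T) (F : (ℕ → X) → ℝ) :
    ngramExp r pk init (T + 1) F = ngramExp r pk init T (tokenStep r pk T F) :=
  ngramExp_add hT 1 F

theorem abs_ngramExp_le (hpk : ∀ Y e, 0 ≤ pk Y e) (hinit : ∀ z, 0 ≤ init z) (T : ℕ)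
    (F : (ℕ → X) → ℝ) : |ngramExp r pk init T F| ≤ ngramExp r pk init T fun x => |F x| := by
  refine (abs_sum_le_sum_abs _ _).trans (sum_le_sum fun z _ => ?_)
  rw [abs_mul, abs_of_nonneg (hinit z)]
  exact mul_le_mul_of_nonneg_left (abs_ngramCondExp_le hpk _ _ _ _) (hinit z)

variable {β : Type*} [Fintype β] [DecidableEq β]

theorem sum_abs_ngramExp_fiberIndicator_mul_le (hpk : ∀ Y e, 0 ≤ pk Y e)
    (hinit : ∀ z, 0 ≤ init z) (T : ℕ) (φ : (ℕ → X) → β) (F : (ℕ → X) → ℝ) :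
    ∑ b, |ngramExp r pk init T (fiberIndicator φ b * F)| ≤
      ngramExp r pk init T fun x => |F x| :=
  calc ∑ b, |ngramExp r pk init T (fiberIndicator φ b * F)|
      ≤ ∑ b, ngramExp r pk init T (fiberIndicator φ b * fun x => |F x|) :=
        sum_le_sum fun b _ => (abs_ngramExp_le hpk hinit T _).trans_eq <| by
          congr 1
          funext x
          rw [Pi.mul_apply, abs_mul, abs_of_nonneg (fiberIndicator_nonneg φ b x), Pi.mul_apply]
    _ = ngramExp r pk init T fun x => |F x| := by
        rw [← map_sum, ← sum_mul, sum_fiberIndicator, one_mul]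

/-- The law of an observable `φ` of the first `T` tokens of an `n`-gram chain. -/
noncomputable def ngramLaw (r : ι → ℕ) (pk : (ι → X) → X → ℝ) (init : (Fin R → X) → ℝ) (T : ℕ)
    (φ : (ℕ → X) → β) (b : β) : ℝ :=
  ngramExp r pk init T (fiberIndicator φ b)

theorem ngramLaw_mem_stdSimplex (hpk : ∀ Y, pk Y ∈ stdSimplex ℝ X)
    (hinit : init ∈ stdSimplex ℝ (Fin R → X)) (T : ℕ) (φ : (ℕ → X) → β) :
    ngramLaw r pk init T φ ∈ stdSimplex ℝ β := by
  have h := (convex_stdSimplex ℝ β).sum_mem (fun z _ => hinit.1 z) hinit.2 fun z _ =>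
    ngramCondExp_fiberIndicator_mem_stdSimplex (r := r) hpk (T - R) R φ (extendSeq z)
  convert h using 1
  funext b
  simp [ngramLaw, ngramExp_apply]

end NgramLaw

section NgramProb

open scoped Matrix

variable {d n R : ℕ} {r : Fin n → ℕ} {pk : (Fin n → Fin d) → Fin d → ℝ}
  {init : (Fin R → Fin d) → ℝ}

theorem ngramExp_comp_stateAt [Nonempty (Fin d)] {hR : 0 < R} {hrpos : ∀ i, 0 < r i}
    (hrR : ∀ i, r i ≤ R) (k : ℕ) (f : (Fin R → Fin d) → ℝ) :
    ngramExp r pk init (R + k) (fun x => f (stateAt R (R + k) x)) =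
      f ⬝ᵥ (windowMatrix d n R hR r hrpos pk ^ k *ᵥ init) := by
  rw [ngramExp_apply, Nat.add_sub_cancel_left,
    ngramCondExp_comp_stateAt (hR := hR) (hrpos := hrpos) hrR k le_rfl,
    Matrix.dotProduct_mulVec, dotProduct_comm]
  simp only [stateAt_extendSeq, dotProduct]

theorem ngramProb_self (z : Fin R → Fin d) : ngramProb d n R R r pk init le_rfl z = init z := by
  unfold ngramProb
  rw [prod_eq_one fun l _ => absurd l.2 (by simp), mul_one]

variable [Nonempty (Fin d)]

theorem ngramProb_eq_prod_extendSeq {T : ℕ} (hRT : R ≤ T) (x : Fin T → Fin d) :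
    ngramProb d n R T r pk init hRT x = init (stateAt R R (extendSeq x)) *
      ∏ l ∈ Ico R T, pk (fun k => extendSeq x (l - r k)) (extendSeq x l) := by
  rw [ngramProb, ← prod_attach (Ico R T)]
  congr 1
  · congr 1
    funext i
    rw [stateAt, Nat.sub_self, zero_add, extendSeq_of_lt]
  · refine prod_congr rfl fun l _ => ?_
    have hl : l.1 < T := (mem_Ico.1 l.2).2
    simp only [extendSeq_of_lt x hl, extendSeq_of_lt x ((Nat.sub_le _ _).trans_lt hl)]

theorem ngramProb_snoc (hR : 0 < R) (hrpos : ∀ i, 0 < r i) {T : ℕ} (hRT : R ≤ T)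
    (x : Fin T → Fin d) (e : Fin d) :
    ngramProb d n R (T + 1) r pk init (Nat.le_succ_of_le hRT) (Fin.snoc x e) =
      ngramProb d n R T r pk init hRT x * pk (fun k => extendSeq x (T - r k)) e := by
  have hpast {i : ℕ} (hi : i < T) : Function.update (extendSeq x) T e i = extendSeq x i :=
    Function.update_of_ne hi.ne _ _
  have hstate : stateAt R R (Function.update (extendSeq x) T e) = stateAt R R (extendSeq x) :=
    funext fun i => hpast (by lia)
  have hparents (k : Fin n) : T - r k < T := Nat.sub_lt (hR.trans_le hRT) (hrpos k)
  have hprod : ∏ l ∈ Ico R T, pk (fun k => Function.update (extendSeq x) T e (l - r k))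
        (Function.update (extendSeq x) T e l) =
      ∏ l ∈ Ico R T, pk (fun k => extendSeq x (l - r k)) (extendSeq x l) :=
    prod_congr rfl fun l hl => by
      have hlT := (mem_Ico.1 hl).2
      simp only [hpast hlT, hpast ((Nat.sub_le _ _).trans_lt hlT)]
  rw [ngramProb_eq_prod_extendSeq, ngramProb_eq_prod_extendSeq, extendSeq_snoc,
    prod_Ico_succ_top hRT, hstate, hprod, Function.update_self, mul_assoc]
  simp only [hpast (hparents _)]

theorem sum_ngramProb_mul (hR : 0 < R) (hrpos : ∀ i, 0 < r i) {T : ℕ} (hRT : R ≤ T)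
    (F : (ℕ → Fin d) → ℝ) :
    ∑ x, ngramProb d n R T r pk init hRT x * F (extendSeq x) = ngramExp r pk init T F := by
  induction T, hRT using Nat.le_induction generalizing F with
  | base => simp only [ngramProb_self, ngramExp_apply, Nat.sub_self, ngramCondExp_zero]
  | succ T hRT ih =>
    rw [ngramExp_succ hRT, ← ih, ← (Fin.snocEquiv fun _ : Fin (T + 1) => Fin d).sum_comp,
      Fintype.sum_prod_type, sum_comm]
    refine sum_congr rfl fun x _ => ?_
    simp only [Fin.snocEquiv, Equiv.coe_fn_mk, ngramProb_snoc hR hrpos hRT, extendSeq_snoc,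
      tokenStep_apply, mul_sum, mul_assoc]

end NgramProb

section SeqWindow

variable {X ι : Type*}

/-- The window `(x_l, (x_{l-s})_{s ∈ S})` of an infinite sequence, extending `window` to a function
on `ℕ → X`. -/
def seqWindow (S : Finset ℕ) (l : ℕ) (x : ℕ → X) : X × ({s // s ∈ S} → X) :=
  (x l, fun s => x (l - s.1))

theorem dependsOn_seqWindow (S : Finset ℕ) (l : ℕ) :
    DependsOn (seqWindow (X := X) S l) (Set.Iio (l + 1)) := fun _ _ h =>
  Prod.ext (h l (Nat.lt_succ_self l)) (funext fun s => h _ (Nat.lt_succ_of_le (Nat.sub_le l s)))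

theorem seqWindow_add {S : Finset ℕ} {M : ℕ} (hS : ∀ s ∈ S, s ≤ M) (u : ℕ) :
    seqWindow (X := X) S (M + u) = fun x => seqWindow S M fun i => x (i + u) := by
  funext x
  simp only [seqWindow, Prod.mk.injEq, true_and]
  funext s
  rw [Nat.sub_add_comm (hS s s.2)]

variable [Fintype X] [DecidableEq X] [Nonempty X] {r : ι → ℕ} {pk : (ι → X) → X → ℝ}

/-- The conditional law of the window at position `M`, as a function of the first `R` tokens. -/
noncomputable def windowKernel {R : ℕ} (r : ι → ℕ) (pk : (ι → X) → X → ℝ) (S : Finset ℕ) (M : ℕ)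
    (E : X × ({s // s ∈ S} → X)) (z : Fin R → X) : ℝ :=
  ngramCondExp r pk (M + 1 - R) R (fiberIndicator (seqWindow S M) E) (extendSeq z)

theorem windowKernel_mem_stdSimplex (hpk : ∀ Y, pk Y ∈ stdSimplex ℝ X) {R : ℕ} (S : Finset ℕ)
    (M : ℕ) (z : Fin R → X) :
    (fun E => windowKernel r pk S M E z) ∈ stdSimplex ℝ (X × ({s // s ∈ S} → X)) :=
  ngramCondExp_fiberIndicator_mem_stdSimplex hpk _ _ _ _

theorem ngramLaw_seqWindow_self {R : ℕ} (init : (Fin R → X) → ℝ) (S : Finset ℕ) (M : ℕ)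
    (E : X × ({s // s ∈ S} → X)) :
    ngramLaw r pk init (M + 1) (seqWindow S M) E = windowKernel r pk S M E ⬝ᵥ init :=
  dotProduct_comm _ _

theorem ngramCondExp_fiberIndicator_seqWindow {R M : ℕ} (hR : 0 < R) (hrpos : ∀ i, 0 < r i)
    (hrR : ∀ i, r i ≤ R) (hRM : R ≤ M) {S : Finset ℕ} (hS : ∀ s ∈ S, s ≤ M) (u : ℕ)
    (E : X × ({s // s ∈ S} → X)) :
    ngramCondExp r pk (M + 1 - R) (R + u) (fiberIndicator (seqWindow S (M + u)) E) =
      fun x => windowKernel r pk S M E (stateAt R (R + u) x) := by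
  have hshift : fiberIndicator (seqWindow (X := X) S (M + u)) E =
      fun x => fiberIndicator (seqWindow S M) E fun i => x (i + u) := by
    rw [seqWindow_add hS]
    rfl
  have hdep : DependsOn (ngramCondExp r pk (M + 1 - R) R (fiberIndicator (seqWindow S M) E))
      (Set.Iio R) := by
    refine dependsOn_ngramCondExp hrpos _ hR ?_
    rw [Nat.add_sub_cancel' (Nat.le_succ_of_le hRM)]
    exact dependsOn_fiberIndicator (dependsOn_seqWindow S M) E
  rw [hshift, ngramCondExp_comp_shift _ hrR]
  funext x
  refine hdep fun i hi => ?_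
  rw [extendSeq_of_lt _ hi, stateAt, Nat.add_sub_cancel_left, add_comm]

end SeqWindow

section Window

open scoped Matrix

variable {d n R M : ℕ} {hR : 0 < R} {r : Fin n → ℕ} {hrpos : ∀ i, 0 < r i}
  {pk : (Fin n → Fin d) → Fin d → ℝ} {init : (Fin R → Fin d) → ℝ} {S : Finset ℕ}
  [Nonempty (Fin d)]

theorem ngramLaw_seqWindow (hrR : ∀ i, r i ≤ R) (hRM : R ≤ M) (hS : ∀ s ∈ S, s ≤ M) (u : ℕ)
    (E : Fin d × ({s // s ∈ S} → Fin d)) :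
    ngramLaw r pk init (M + u + 1) (seqWindow S (M + u)) E =
      windowKernel r pk S M E ⬝ᵥ (windowMatrix d n R hR r hrpos pk ^ u *ᵥ init) := by
  have htime : M + u + 1 = R + u + (M + 1 - R) := by lia
  rw [ngramLaw, htime, ngramExp_add (Nat.le_add_right R u),
    ngramCondExp_fiberIndicator_seqWindow hR hrpos hrR hRM hS, ngramExp_comp_stateAt hrR]

theorem ngramLaw_seqWindow_pair (hrR : ∀ i, r i ≤ R) (hRM : R ≤ M) (hS : ∀ s ∈ S, s ≤ M)
    {S' : Finset ℕ} {l u : ℕ} (hl : l + 1 = R + u) (k : ℕ)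
    (w : (Fin d × ({s // s ∈ S} → Fin d)) × (Fin d × ({s // s ∈ S'} → Fin d))) :
    ngramLaw r pk init (M + (u + k) + 1)
        (fun x => (seqWindow S (M + (u + k)) x, seqWindow S' l x)) w =
      ngramExp r pk init (R + u) (fiberIndicator (seqWindow S' l) w.2 * fun x =>
        (windowKernel r pk S M w.1 ᵥ* windowMatrix d n R hR r hrpos pk ^ k)
          (stateAt R (R + u) x)) := by
  have htime : M + (u + k) + 1 = R + u + (k + (M + 1 - R)) := by lia
  have hpast : DependsOn (fiberIndicator (seqWindow (X := Fin d) S' l) w.2) (Set.Iio (R + u)) :=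
    hl ▸ dependsOn_fiberIndicator (dependsOn_seqWindow S' l) w.2
  rw [ngramLaw, htime, ngramExp_add (Nat.le_add_right R u), fiberIndicator_prodMk,
    ngramCondExp_mul hpast, ngramCondExp_add, add_assoc R u k,
    ngramCondExp_fiberIndicator_seqWindow hR hrpos hrR hRM hS, ← add_assoc R u k,
    ngramCondExp_comp_stateAt hrR k (Nat.le_add_right R u)]

theorem ngramLaw_seqWindow_pair_sub (hrR : ∀ i, r i ≤ R) (hRM : R ≤ M) (hS : ∀ s ∈ S, s ≤ M)
    (hpk : ∀ Y, pk Y ∈ stdSimplex ℝ (Fin d)) {S' : Finset ℕ} {l u : ℕ} (hl : l + 1 = R + u)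
    (k : ℕ) (c : ℝ)
    (w : (Fin d × ({s // s ∈ S} → Fin d)) × (Fin d × ({s // s ∈ S'} → Fin d))) :
    ngramLaw r pk init (M + (u + k) + 1)
        (fun x => (seqWindow S (M + (u + k)) x, seqWindow S' l x)) w -
        c * ngramLaw r pk init (l + 1) (seqWindow S' l) w.2 =
      ngramExp r pk init (R + u) (fiberIndicator (seqWindow S' l) w.2 * fun x =>
        ((fun z => windowKernel r pk S M w.1 z - c) ᵥ* windowMatrix d n R hR r hrpos pk ^ k)
          (stateAt R (R + u) x)) := by
  rw [ngramLaw_seqWindow_pair (hR := hR) (hrpos := hrpos) hrR hRM hS hl, ngramLaw, hl,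
    sub_const_vecMul (pow_mem (windowMatrix_mem_colStochastic hpk) k), ← smul_eq_mul c,
    ← map_smul, ← map_sub]
  congr 1
  funext x
  simp only [Pi.sub_apply, Pi.mul_apply, Pi.smul_apply, smul_eq_mul]
  ring

theorem window_eq_seqWindow {T : ℕ} (S : Finset ℕ) (x : Fin T → Fin d) {l : ℕ} (hl : l < T) :
    window d T S x l hl = seqWindow S l (extendSeq x) := by
  simp only [window, seqWindow, extendSeq_of_lt x hl,
    extendSeq_of_lt x ((Nat.sub_le _ _).trans_lt hl)]
  rfl

theorem sum_ite_ngramProb (hR : 0 < R) (hrpos : ∀ i, 0 < r i) {T : ℕ} (hRT : R ≤ T)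
    {β : Type*} [DecidableEq β] (φ : (ℕ → Fin d) → β) (b : β) :
    ∑ x, (if φ (extendSeq x) = b then ngramProb d n R T r pk init hRT x else 0) =
      ngramLaw r pk init T φ b := by
  simp only [ngramLaw, ← sum_ngramProb_mul hR hrpos hRT, fiberIndicator, mul_ite, mul_one,
    mul_zero]

theorem windowLaw_ngramProb (hR : 0 < R) (hrpos : ∀ i, 0 < r i) {T : ℕ} (hRT : R ≤ T)
    (S : Finset ℕ) {l : ℕ} (hl : l < T) :
    windowLaw d T S (ngramProb d n R T r pk init hRT) l hl =
      ngramLaw r pk init T (seqWindow S l) := by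
  funext E
  simp only [windowLaw, window_eq_seqWindow, sum_ite_ngramProb hR hrpos]

theorem sum_ite_window_pair (hR : 0 < R) (hrpos : ∀ i, 0 < r i) {T : ℕ} (hRT : R ≤ T)
    (S S' : Finset ℕ) {l l' : ℕ} (hl : l < T) (hl' : l' < T)
    (w : (Fin d × ({s // s ∈ S} → Fin d)) × (Fin d × ({s // s ∈ S'} → Fin d))) :
    ∑ x, (if window d T S x l hl = w.1 ∧ window d T S' x l' hl' = w.2 then
        ngramProb d n R T r pk init hRT x else 0) =
      ngramLaw r pk init T (fun x => (seqWindow S l x, seqWindow S' l' x)) w := by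
  simp only [window_eq_seqWindow, ← sum_ite_ngramProb hR hrpos hRT, Prod.ext_iff]

end Window

section Mixing

open scoped Matrix

variable {d n R M : ℕ} [Nonempty (Fin d)] {hR : 0 < R} {r : Fin n → ℕ} {hrpos : ∀ i, 0 < r i}
  {pk : (Fin n → Fin d) → Fin d → ℝ} {μ₀ μ : (Fin R → Fin d) → ℝ} {lam : ℝ} {S S' : Finset ℕ}

theorem sum_abs_ngramLaw_seqWindow_sub_le (hrR : ∀ i, r i ≤ R) (hRM : R ≤ M)
    (hS : ∀ s ∈ S, s ≤ M) (hpk : ∀ Y, pk Y ∈ stdSimplex ℝ (Fin d))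
    (h : IsSpectralContraction (windowMatrix d n R hR r hrpos pk) μ lam)
    (hμ₀ : ∑ z, μ₀ z = 1) (u : ℕ) :
    ∑ E, |ngramLaw r pk μ₀ (M + u + 1) (seqWindow S (M + u)) E -
        ngramLaw r pk μ (M + 1) (seqWindow S M) E| ≤ lam ^ u * √(chiSq μ₀ μ) := by
  simp only [ngramLaw_seqWindow (hR := hR) (hrpos := hrpos) hrR hRM hS, ngramLaw_seqWindow_self,
    ← dotProduct_sub]
  exact (sum_abs_dotProduct_le (windowKernel_mem_stdSimplex hpk S M) _).trans
    (h.sum_abs_pow_mulVec_sub_le u hμ₀)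

theorem sum_abs_ngramLaw_pair_sub_mul_le_sqrt (hrR : ∀ i, r i ≤ R) (hRM : R ≤ M)
    (hS : ∀ s ∈ S, s ≤ M) (hpk : ∀ Y, pk Y ∈ stdSimplex ℝ (Fin d))
    (h : IsSpectralContraction (windowMatrix d n R hR r hrpos pk) μ lam) (hlam : lam ≤ 1)
    (hμ₀ : μ₀ ∈ stdSimplex ℝ (Fin R → Fin d)) {l u : ℕ} (hl : l + 1 = R + u) (k : ℕ)
    (E : Fin d × ({s // s ∈ S} → Fin d)) :
    ∑ E', |ngramLaw r pk μ₀ (M + (u + k) + 1)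
          (fun x => (seqWindow S (M + (u + k)) x, seqWindow S' l x)) (E, E') -
        ngramLaw r pk μ (M + 1) (seqWindow S M) E *
          ngramLaw r pk μ₀ (l + 1) (seqWindow S' l) E'| ≤
      √(chiSq μ₀ μ + 1) * (lam ^ k * √(ngramLaw r pk μ (M + 1) (seqWindow S M) E)) := by
  set P := windowMatrix d n R hR r hrpos pk
  rw [ngramLaw_seqWindow_self]
  set f := windowKernel (R := R) r pk S M E
  set g : (Fin R → Fin d) → ℝ := fun z => f z - f ⬝ᵥ μ with hg
  have hf (z : Fin R → Fin d) : f z ∈ Set.Icc 0 1 :=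
    mem_Icc_of_mem_stdSimplex (windowKernel_mem_stdSimplex hpk S M z) E
  have hmean : g ⬝ᵥ μ = 0 := by
    simp only [hg, dotProduct, sub_mul, sum_sub_distrib, ← mul_sum, h.sum_eq_one, mul_one,
      sub_self]
  calc _ = ∑ E', |ngramExp r pk μ₀ (R + u) (fiberIndicator (seqWindow S' l) E' * fun x =>
          (g ᵥ* P ^ k) (stateAt R (R + u) x))| :=
        sum_congr rfl fun E' _ => congrArg abs <|
          ngramLaw_seqWindow_pair_sub hrR hRM hS hpk hl k (f ⬝ᵥ μ) (E, E')
    _ ≤ ngramExp r pk μ₀ (R + u) fun x => |(g ᵥ* P ^ k) (stateAt R (R + u) x)| :=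
        sum_abs_ngramExp_fiberIndicator_mul_le (fun Y => (hpk Y).1) hμ₀.1 _ _ _
    _ = ∑ z, (P ^ u *ᵥ μ₀) z * |(g ᵥ* P ^ k) z| :=
        (ngramExp_comp_stateAt hrR u fun z => |(g ᵥ* P ^ k) z|).trans (dotProduct_comm _ _)
    _ ≤ √(chiSq μ₀ μ + 1) * (lam ^ k * √(∑ z, μ z * g z ^ 2)) :=
        h.sum_pow_mulVec_mul_abs_vecMul_pow_le hlam u k hμ₀.2 hmean
    _ ≤ √(chiSq μ₀ μ + 1) * (lam ^ k * √(f ⬝ᵥ μ)) := by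
        have := h.nonneg
        gcongr
        exact sum_mul_sub_dotProduct_sq_le h.mem_stdSimplex hf

theorem sum_abs_ngramLaw_pair_sub_mul_le (hrR : ∀ i, r i ≤ R) (hRM : R ≤ M)
    (hS : ∀ s ∈ S, s ≤ M) (hpk : ∀ Y, pk Y ∈ stdSimplex ℝ (Fin d))
    (h : IsSpectralContraction (windowMatrix d n R hR r hrpos pk) μ lam) (hlam : lam ≤ 1)
    (hμ₀ : μ₀ ∈ stdSimplex ℝ (Fin R → Fin d)) {m : ℝ} (hm : 0 < m)
    (hmle : ∀ E, m ≤ ngramLaw r pk μ (M + 1) (seqWindow S M) E)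
    {l u : ℕ} (hl : l + 1 = R + u) (k : ℕ) :
    ∑ E, ∑ E', |ngramLaw r pk μ₀ (M + (u + k) + 1)
          (fun x => (seqWindow S (M + (u + k)) x, seqWindow S' l x)) (E, E') -
        ngramLaw r pk μ (M + 1) (seqWindow S M) E *
          ngramLaw r pk μ₀ (l + 1) (seqWindow S' l) E'| ≤
      √(chiSq μ₀ μ + 1) * lam ^ k / √m := by
  set ν := ngramLaw r pk μ (M + 1) (seqWindow S M)
  have hν : ν ∈ stdSimplex ℝ _ := ngramLaw_mem_stdSimplex hpk h.mem_stdSimplex _ _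
  have hsqrt (E : Fin d × ({s // s ∈ S} → Fin d)) : √(ν E) ≤ ν E / √m := by
    rw [le_div_iff₀ (Real.sqrt_pos.2 hm)]
    calc √(ν E) * √m ≤ √(ν E) * √(ν E) := by gcongr; exact hmle E
      _ = ν E := Real.mul_self_sqrt (hν.1 E)
  have := h.nonneg
  calc _ ≤ ∑ E, √(chiSq μ₀ μ + 1) * (lam ^ k * (ν E / √m)) := sum_le_sum fun E _ =>
        (sum_abs_ngramLaw_pair_sub_mul_le_sqrt hrR hRM hS hpk h hlam hμ₀ hl k E).trans
          (by gcongr; exact hsqrt E)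
    _ = √(chiSq μ₀ μ + 1) * lam ^ k / √m := by
        rw [← mul_sum, ← mul_sum, ← sum_div, hν.2]
        ring

-- `k` counts the transitions from the state formed by the last `R` tokens of `Y'_{M + i}` to the
-- state formed by the first `R` tokens of the stretch `L - M, …, L` carrying `Y_L`.
theorem tvDist_ngramLaw_pair_le (hrR : ∀ i, r i ≤ R) (hRM : R ≤ M) (hS : ∀ s ∈ S, s ≤ M)
    (hS' : ∀ s ∈ S', s ≤ M) (hpk : ∀ Y, pk Y ∈ stdSimplex ℝ (Fin d))
    (h : IsSpectralContraction (windowMatrix d n R hR r hrpos pk) μ lam) (hlam : lam ≤ 1)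
    (hμ₀ : μ₀ ∈ stdSimplex ℝ (Fin R → Fin d)) {m : ℝ} (hm : 0 < m)
    (hmle : ∀ E, m ≤ ngramLaw r pk μ (M + 1) (seqWindow S M) E)
    {L i k : ℕ} (hL : L + R = 2 * M + i + k + 1) :
    tvDist (ngramLaw r pk μ₀ (L + 1) fun x => (seqWindow S L x, seqWindow S' (M + i) x))
        (fun w => ngramLaw r pk μ (M + 1) (seqWindow S M) w.1 *
          ngramLaw r pk μ (M + 1) (seqWindow S' M) w.2) ≤
      √(chiSq μ₀ μ + 1) * (lam ^ i + lam ^ k / √m) / 2 := by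
  obtain ⟨u, hu⟩ : ∃ u, M + i + 1 = R + u := ⟨M + i + 1 - R, by lia⟩
  obtain rfl : L = M + (u + k) := by lia
  have hν := ngramLaw_mem_stdSimplex (r := r) hpk h.mem_stdSimplex (M + 1) (seqWindow S M)
  have hjoint := sum_abs_ngramLaw_pair_sub_mul_le (S' := S') hrR hRM hS hpk h hlam hμ₀ hm hmle hu k
  have hpast := sum_abs_ngramLaw_seqWindow_sub_le hrR hRM hS' hpk h hμ₀.2 i
  have hmono : √(chiSq μ₀ μ) ≤ √(chiSq μ₀ μ + 1) := Real.sqrt_le_sqrt (by linarith)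
  have hpast' := hpast.trans (mul_le_mul_of_nonneg_left hmono (pow_nonneg h.nonneg i))
  refine div_le_div_of_nonneg_right ?_ two_pos.le
  refine (sum_abs_sub_mul_le hν _ _ _).trans ((add_le_add hjoint hpast').trans_eq ?_)
  ring

theorem tvDist_average_ngramLaw_pair_le (hrR : ∀ i, r i ≤ R) (hRM : R ≤ M)
    (hS : ∀ s ∈ S, s ≤ M) (hS' : ∀ s ∈ S', s ≤ M) (hpk : ∀ Y, pk Y ∈ stdSimplex ℝ (Fin d))
    (h : IsSpectralContraction (windowMatrix d n R hR r hrpos pk) μ lam) (hlam : lam < 1)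
    (hμ₀ : μ₀ ∈ stdSimplex ℝ (Fin R → Fin d)) {m : ℝ} (hm : 0 < m)
    (hmle : ∀ E, m ≤ ngramLaw r pk μ (M + 1) (seqWindow S M) E) {L : ℕ} (hML : M < L) :
    tvDist (fun w => (∑ l ∈ Ico M L, ngramLaw r pk μ₀ (L + 1)
          (fun x => (seqWindow S L x, seqWindow S' l x)) w) / ((L : ℝ) - M))
        (fun w => ngramLaw r pk μ (M + 1) (seqWindow S M) w.1 *
          ngramLaw r pk μ (M + 1) (seqWindow S' M) w.2) ≤
      (M - R) / (L - M) + √(chiSq μ₀ μ + 1) / ((L - M) * (1 - lam) * √m) := by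
  set C := √(chiSq μ₀ μ + 1)
  set q : (Fin d × ({s // s ∈ S} → Fin d)) × (Fin d × ({s // s ∈ S'} → Fin d)) → ℝ :=
    fun w => ngramLaw r pk μ (M + 1) (seqWindow S M) w.1 *
      ngramLaw r pk μ (M + 1) (seqWindow S' M) w.2
  set B : ℕ → ℝ := fun l =>
    tvDist (ngramLaw r pk μ₀ (L + 1) fun x => (seqWindow S L x, seqWindow S' l x)) q
  have hν {S : Finset ℕ} := ngramLaw_mem_stdSimplex (r := r) hpk h.mem_stdSimplex (M + 1)
    (seqWindow S M)
  have hB1 (l : ℕ) : B l ≤ 1 :=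
    tvDist_le_one (ngramLaw_mem_stdSimplex hpk hμ₀ _ _) (mul_mem_stdSimplex hν hν)
  have hm1 : √m ≤ 1 := Real.sqrt_le_one.2 <|
    (hmle (Classical.arbitrary _)).trans (mem_Icc_of_mem_stdSimplex hν _).2
  have hsqrt : 0 < √m := Real.sqrt_pos.2 hm
  have hsum : ∑ l ∈ Ico M L, B l ≤ (M - R : ℕ) + (C / 2 + C / 2 / √m) / (1 - lam) := by
    rw [sum_Ico_eq_sum_range]
    refine sum_range_le_of_le_pow_add_pow h.nonneg hlam (by positivity) (fun j => hB1 _)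
      fun i k hik => ?_
    refine (tvDist_ngramLaw_pair_le hrR hRM hS hS' hpk h hlam.le hμ₀ hm hmle
      (by lia : L + R = 2 * M + i + k + 1)).trans_eq ?_
    ring
  have hconst : C / 2 + C / 2 / √m ≤ C / √m := by
    have : C / 2 ≤ C / 2 / √m := le_div_self (by positivity) hsqrt hm1
    linarith [add_halves (C / √m), div_right_comm C 2 √m]
  have hcard : (#(Ico M L) : ℝ) = L - M := by
    rw [Nat.card_Ico, Nat.cast_sub hML.le]
  have hLM : (0 : ℝ) < L - M := sub_pos.2 (by exact_mod_cast hML)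
  calc _ ≤ (∑ l ∈ Ico M L, B l) / (L - M) :=
        hcard ▸ tvDist_average_le (nonempty_Ico.2 hML) _ q
    _ ≤ ((M - R) + C / √m / (1 - lam)) / (L - M) := by
        rw [Nat.cast_sub hRM] at hsum
        have := sub_pos.2 hlam
        gcongr
        exact hsum.trans (by gcongr)
    _ = (M - R) / (L - M) + C / ((L - M) * (1 - lam) * √m) := by
        rw [add_div, div_div, div_div, mul_comm √m, mul_comm _ ((L : ℝ) - M), mul_assoc]

end Mixing

theorem sub_div_add_div_le_two_mul_div {L M R lam m C : ℝ} (hL : 0 < L) (hML : 2 * M ≤ L)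
    (hM : 0 ≤ M) (hR : 0 ≤ R) (hlam : lam < 1) (hm : 0 < m) (hC : 0 ≤ C) :
    (M - R) / (L - M) + C / ((L - M) * (1 - lam) * √m) ≤
      2 * M / L + 4 * C / (L * (1 - lam) * √m) := by
  have hLM : L / 2 ≤ L - M := by linarith
  have hlam' := sub_pos.2 hlam
  have := Real.sqrt_pos.2 hm
  refine add_le_add ?_ ?_
  · calc (M - R) / (L - M) ≤ M / (L / 2) := by gcongr; linarith
      _ = 2 * M / L := by field_simp
  · calc C / ((L - M) * (1 - lam) * √m) ≤ C / (L / 2 * (1 - lam) * √m) := by gcongr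
      _ = 2 * C / (L * (1 - lam) * √m) := by field_simp
      _ ≤ 4 * C / (L * (1 - lam) * √m) := by gcongr; norm_num

theorem statement6_general
    (d n R M L : ℕ) (hd : 0 < d) (hR : 0 < R)
    (r : Fin n → ℕ) (hrpos : ∀ i, 0 < r i)
    (hrR : ∀ i, r i ≤ R)
    (pk : (Fin n → Fin d) → Fin d → ℝ)
    (hpk0 : ∀ Y e, 0 ≤ pk Y e) (hpk1 : ∀ Y, ∑ e, pk Y e = 1)
    (μ0 : (Fin R → Fin d) → ℝ) (hμ00 : ∀ Z, 0 ≤ μ0 Z) (hμ01 : ∑ Z, μ0 Z = 1)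
    (μ : (Fin R → Fin d) → ℝ) (hμpos : ∀ Z, 0 < μ Z) (hμ1 : ∑ Z, μ Z = 1)
    (hstat : ∀ Z', μ Z' = ∑ Z, windowMatrix d n R hR r hrpos pk Z' Z * μ Z)
    (lam : ℝ) (hlam0 : 0 ≤ lam) (hlam1 : lam < 1)
    (hop : ∀ v : (Fin R → Fin d) → ℝ,
      √(∑ Z', Matrix.mulVec (specA d n R hR r hrpos pk μ) v Z' ^ 2)
        ≤ lam * √(∑ Z, v Z ^ 2))
    (hRM : R ≤ M) (hML : M < L)
    (S S' : Finset ℕ) (hS : ∀ s ∈ S, s ≤ M) (hS' : ∀ s ∈ S', s ≤ M)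
    (m : ℝ) (hm0 : 0 < m)
    (hmle : ∀ w, m ≤ windowLaw d (M + 1) S (ngramProb d n R (M + 1) r pk μ (by omega)) M
        (Nat.lt_succ_self M) w) :
    tvDist
        (fun w : (Fin d × ({s // s ∈ S} → Fin d)) × (Fin d × ({s // s ∈ S'} → Fin d)) =>
          (∑ l ∈ (Finset.Ico M L).attach,
              ∑ x : Fin (L + 1) → Fin d,
                if window d (L + 1) S x L (Nat.lt_succ_self L) = w.1 ∧
                    window d (L + 1) S' x l.1 (icoLtSucc l) = w.2 then
                  ngramProb d n R (L + 1) r pk μ0 (by omega) x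
                else 0) /
            ((L : ℝ) - M))
        (fun w =>
          windowLaw d (M + 1) S (ngramProb d n R (M + 1) r pk μ (by omega)) M
              (Nat.lt_succ_self M) w.1 *
            windowLaw d (M + 1) S' (ngramProb d n R (M + 1) r pk μ (by omega)) M
              (Nat.lt_succ_self M) w.2)
      ≤ (M - R) / (L - M) + √(chiSq μ0 μ + 1) / ((L - M) * (1 - lam) * √m) := by
  have : Nonempty (Fin d) := ⟨⟨0, hd⟩⟩
  have hpk (Y : Fin n → Fin d) : pk Y ∈ stdSimplex ℝ (Fin d) := ⟨hpk0 Y, hpk1 Y⟩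
  have hspec : IsSpectralContraction (windowMatrix d n R hR r hrpos pk) μ lam :=
    ⟨windowMatrix_mem_colStochastic hpk, hμpos, hμ1, funext fun Z => (hstat Z).symm,
      l2_opNorm_le_of_sqrt_sum_sq_le hlam0 hop⟩
  simp only [windowLaw_ngramProb hR hrpos] at hmle
  simp only [windowLaw_ngramProb hR hrpos, sum_ite_window_pair hR hrpos]
  rw [funext fun w => congrArg (· / ((L : ℝ) - M)) (sum_attach (Ico M L) fun l =>
    ngramLaw r pk μ0 (L + 1) (fun x => (seqWindow S L x, seqWindow S' l x)) w)]
  exact tvDist_average_ngramLaw_pair_le hrR hRM hS hS' hpk hspec hlam1 ⟨hμ00, hμ01⟩ hm0 hmle hML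

/-- Second-order convergence: the averaged joint law
`p̂(E,E') = (L−M)⁻¹ Σ_{l=M+1}^L p(Y_{L+1}=E, Y'_l=E')` is within TV distance
`2M/L + 4√(D₀+1)/(L(1−λ)√(min ν))` of the product `ν ⊗ ν'` of stationary window marginals. -/
theorem statement6
    (d n R M L : ℕ) (hd : 0 < d) (hn : 0 < n) (hR : 0 < R)
    (r : Fin n → ℕ) (hrpos : ∀ i, 0 < r i) (hrmono : StrictMono r)
    (hrR : ∀ i, r i ≤ R) (hRmax : ∃ i, r i = R)
    (pk : (Fin n → Fin d) → Fin d → ℝ)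
    (hpk0 : ∀ Y e, 0 ≤ pk Y e) (hpk1 : ∀ Y, ∑ e, pk Y e = 1)
    (μ0 : (Fin R → Fin d) → ℝ) (hμ00 : ∀ Z, 0 ≤ μ0 Z) (hμ01 : ∑ Z, μ0 Z = 1)
    (μ : (Fin R → Fin d) → ℝ) (hμpos : ∀ Z, 0 < μ Z) (hμ1 : ∑ Z, μ Z = 1)
    (hstat : ∀ Z', μ Z' = ∑ Z, windowMatrix d n R hR r hrpos pk Z' Z * μ Z)
    (lam : ℝ) (hlam0 : 0 ≤ lam) (hlam1 : lam < 1)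
    (hop : ∀ v : (Fin R → Fin d) → ℝ,
      Real.sqrt (∑ Z', Matrix.mulVec (specA d n R hR r hrpos pk μ) v Z' ^ 2)
        ≤ lam * Real.sqrt (∑ Z, v Z ^ 2))
    (hRM : R ≤ M) (hML : 2 * M ≤ L)
    (S S' : Finset ℕ) (hS : ∀ s ∈ S, 1 ≤ s ∧ s ≤ M) (hS' : ∀ s ∈ S', 1 ≤ s ∧ s ≤ M)
    (m : ℝ) (hm0 : 0 < m)
    (hmle : ∀ w, m ≤ windowLaw d (M + 1) S (ngramProb d n R (M + 1) r pk μ (by omega)) M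
        (Nat.lt_succ_self M) w)
    (hmmem : ∃ w, windowLaw d (M + 1) S (ngramProb d n R (M + 1) r pk μ (by omega)) M
        (Nat.lt_succ_self M) w = m) :
    tvDist
        (fun w : (Fin d × ({s // s ∈ S} → Fin d)) × (Fin d × ({s // s ∈ S'} → Fin d)) =>
          (∑ l ∈ (Finset.Ico M L).attach,
              ∑ x : Fin (L + 1) → Fin d,
                if window d (L + 1) S x L (Nat.lt_succ_self L) = w.1 ∧
                    window d (L + 1) S' x l.1 (icoLtSucc l) = w.2 then
                  ngramProb d n R (L + 1) r pk μ0 (by omega) x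
                else 0) /
            ((L : ℝ) - M))
        (fun w =>
          windowLaw d (M + 1) S (ngramProb d n R (M + 1) r pk μ (by omega)) M
              (Nat.lt_succ_self M) w.1 *
            windowLaw d (M + 1) S' (ngramProb d n R (M + 1) r pk μ (by omega)) M
              (Nat.lt_succ_self M) w.2)
      ≤ 2 * M / L + 4 * Real.sqrt (chiSq μ0 μ + 1) / (L * (1 - lam) * Real.sqrt m) := by
  refine (statement6_general d n R M L hd hR r hrpos hrR pk hpk0 hpk1 μ0 hμ00 hμ01 μ hμpos hμ1
    hstat lam hlam0 hlam1 hop hRM (by lia) S S' (fun s hs => (hS s hs).2)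
    (fun s hs => (hS' s hs).2) m hm0 hmle).trans ?_
  exact sub_div_add_div_le_two_mul_div (by exact_mod_cast (by lia : 0 < L))
    (by exact_mod_cast hML) M.cast_nonneg R.cast_nonneg hlam1 hm0 (Real.sqrt_nonneg _)
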